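/- Let p, N ≥ 1, M ≥ 1, L ≥ 0. For m = 1,…,M and l = 0,…,L let y_l⁽ᵐ⁾ ∈ ℝᵖ, μ̂_l⁽ᵐ⁾ ∈ ℝᴺ, and let Σ̂_l⁽ᵐ⁾ be N×N positive semidefinite matrices, and let C̃ ∈ ℝ^{p×N} be a fixed matrix. Define c₀* = (1/(M(L+1))) Σₘ Σₗ (y_l⁽ᵐ⁾ − C̃ μ̂_l⁽ᵐ⁾) and Σᵥ* = (1/(M(L+1))) Σₘ Σₗ [ C̃ Σ̂_l⁽ᵐ⁾ C̃ᵀ + (y_l⁽ᵐ⁾ − c₀* − C̃ μ̂_l⁽ᵐ⁾)(y_l⁽ᵐ⁾ − c₀* − C̃ μ̂_l⁽ᵐ⁾)ᵀ ], and assume Σᵥ* is positive definite. Then the function L₂(c₀, Σᵥ) = M(L+1)·log det(2π Σᵥ) + tr( Σᵥ⁻¹ Σₘ Σₗ [ C̃ Σ̂_l⁽ᵐ⁾ C̃ᵀ + (y_l⁽ᵐ⁾ − c₀ − C̃ μ̂_l⁽ᵐ⁾)(y_l⁽ᵐ⁾ − c₀ − C̃ μ̂_l⁽ᵐ⁾)ᵀ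 ] ), defined for c₀ ∈ ℝᵖ and Σᵥ positive definite, attains its global minimum at (c₀, Σᵥ) = (c₀*, Σᵥ*). -/

import Mathlib

open Matrix

/-!
For fixed `Σᵥ` the residual matrix is `∑ (Qᵢ + uᵢuᵢᵀ) + K (c₀* - c₀)(c₀* - c₀)ᵀ`, where the
`uᵢ` are the centred residuals and `K` is their number: the cross terms cancel because `∑ uᵢ = 0`.
So `c₀*` minimizes it in the Loewner order, hence also its trace against `Σᵥ⁻¹`.
For `c₀ = c₀*` the residual matrix is `K Σᵥ*`, and the claim becomes
`log det Σᵥ* + p ≤ log det Σᵥ + tr (Σᵥ⁻¹ Σᵥ*)`. Writing `Σᵥ⁻¹ = PᴴP`, this is `log λ ≤ λ - 1`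
summed over the eigenvalues `λ` of `P Σᵥ* Pᴴ`.
-/

open Finset Fintype
open scoped BigOperators

section PositiveMatrices

variable {n : Type*} [Fintype n]

open scoped ComplexOrder MatrixOrder Matrix.Norms.L2Operator in
lemma trace_mul_nonneg_of_posSemidef {𝕜 : Type*} [RCLike 𝕜] {A B : Matrix n n 𝕜}
    (hA : A.PosSemidef) (hB : B.PosSemidef) : 0 ≤ (A * B).trace := by
  classical
  obtain ⟨P, rfl⟩ := CStarAlgebra.nonneg_iff_eq_star_mul_self.mp hA.nonneg
  rw [star_eq_conjTranspose, Matrix.mul_assoc, trace_mul_comm]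
  exact (hB.mul_mul_conjTranspose_same P).trace_nonneg

variable [DecidableEq n] {A B : Matrix n n ℝ}

lemma log_det_smul {c : ℝ} (hc : c ≠ 0) (hA : A.det ≠ 0) :
    Real.log (c • A).det = card n * Real.log c + Real.log A.det := by
  rw [det_smul, Real.log_mul (pow_ne_zero _ hc) hA, Real.log_pow]

lemma log_det_le_trace_sub_card (hA : A.PosDef) :
    Real.log A.det ≤ A.trace - card n := by
  have hdet : A.det = ∏ i, hA.1.eigenvalues i := by
    simpa using hA.1.det_eq_prod_eigenvalues
  have htrace : A.trace = ∑ i, hA.1.eigenvalues i := by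
    simpa using hA.1.trace_eq_sum_eigenvalues
  calc Real.log A.det = ∑ i, Real.log (hA.1.eigenvalues i) := by
        rw [hdet, Real.log_prod fun i _ => (hA.eigenvalues_pos i).ne']
    _ ≤ ∑ i, (hA.1.eigenvalues i - 1) :=
        sum_le_sum fun i _ => Real.log_le_sub_one_of_pos (hA.eigenvalues_pos i)
    _ = A.trace - card n := by simp [htrace]

open scoped MatrixOrder Matrix.Norms.L2Operator in
lemma log_det_add_card_le_log_det_add_trace_inv_mul (hA : A.PosDef) (hB : B.PosDef) :
    Real.log A.det + card n ≤ Real.log B.det + (B⁻¹ * A).trace := by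
  obtain ⟨P, hP, hBP⟩ :=
    CStarAlgebra.isStrictlyPositive_iff_eq_star_mul_self.mp hB.inv.isStrictlyPositive
  have hconj : (P * A * Pᴴ).PosDef := hP.posDef_star_right_conjugate_iff.mpr hA
  have htrace : (P * A * Pᴴ).trace = (B⁻¹ * A).trace := by
    rw [hBP, star_eq_conjTranspose, trace_mul_comm, ← Matrix.mul_assoc]
  have hdet : (P * A * Pᴴ).det = A.det / B.det := by
    calc (P * A * Pᴴ).det = A.det * (star P * P).det := by
          simp only [det_mul, star_eq_conjTranspose]; ring
      _ = A.det / B.det := by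
          rw [← hBP, det_nonsing_inv, Ring.inverse_eq_inv', div_eq_mul_inv]
  have hlog := log_det_le_trace_sub_card hconj
  rw [hdet, htrace, Real.log_div hA.det_pos.ne' hB.det_pos.ne'] at hlog
  linarith

end PositiveMatrices

section GaussianLoss

variable {n : Type*} [Fintype n] [DecidableEq n]

/-- Twice the negative log-likelihood, as a function of the covariance `S`, of `K` centred Gaussian
observations whose (expected) outer products sum to `T`. The weight `K` is allowed to be real. -/
noncomputable def gaussianLoss (K : ℝ) (T S : Matrix n n ℝ) : ℝ :=
  K * Real.log ((2 * Real.pi) • S).det + (S⁻¹ * T).trace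

lemma gaussianLoss_le_of_posSemidef_sub {K : ℝ} {T T' S : Matrix n n ℝ} (hS : S.PosDef)
    (hT : (T' - T).PosSemidef) : gaussianLoss K T S ≤ gaussianLoss K T' S := by
  have htrace : 0 ≤ (S⁻¹ * (T' - T)).trace :=
    trace_mul_nonneg_of_posSemidef hS.inv.posSemidef hT
  rw [Matrix.mul_sub, trace_sub, sub_nonneg] at htrace
  exact add_le_add_right htrace _

lemma gaussianLoss_smul_self_le {K : ℝ} (hK : 0 ≤ K) {A S : Matrix n n ℝ} (hA : A.PosDef)
    (hS : S.PosDef) : gaussianLoss K (K • A) A ≤ gaussianLoss K (K • A) S := by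
  have hinv : A⁻¹ * A = 1 := nonsing_inv_mul A hA.det_pos.ne'.isUnit
  have hlogdet :=
    mul_le_mul_of_nonneg_left (log_det_add_card_le_log_det_add_trace_inv_mul hA hS) hK
  simp only [gaussianLoss, log_det_smul Real.two_pi_pos.ne' hA.det_pos.ne',
    log_det_smul Real.two_pi_pos.ne' hS.det_pos.ne', Matrix.mul_smul, trace_smul, hinv, trace_one,
    smul_eq_mul]
  linarith

end GaussianLoss

lemma expect_prod_eq_inv_smul_sum_sum {ι κ V : Type*} [Fintype ι] [Fintype κ]
    [AddCommMonoid V] [Module ℝ V] [Module ℚ≥0 V] (f : ι × κ → V) :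
    𝔼 i, f i = ((card ι : ℝ) * card κ)⁻¹ • ∑ a, ∑ b, f (a, b) := by
  rw [expect_univ, ← NNRat.cast_smul_eq_nnqsmul ℝ, sum_prod_type]
  simp

section Scatter

variable {ι n : Type*} [Fintype ι]

lemma sum_vecMulVec_add_self_of_sum_eq_zero {R : Type*} [NonUnitalNonAssocSemiring R]
    {u : ι → n → R} (hu : ∑ i, u i = 0) (d : n → R) :
    ∑ i, vecMulVec (u i + d) (u i + d) =
      ∑ i, vecMulVec (u i) (u i) + card ι • vecMulVec d d := by
  have hleft : ∑ i, vecMulVec (u i) d = 0 := by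
    ext a b
    simpa [Matrix.sum_apply, vecMulVec_apply, sum_mul] using congr($hu a * d b)
  have hright : ∑ i, vecMulVec d (u i) = 0 := by
    ext a b
    simpa [Matrix.sum_apply, vecMulVec_apply, mul_sum] using congr(d a * $hu b)
  simp only [vecMulVec_add, add_vecMulVec, sum_add_distrib, hleft, hright, zero_add, add_zero,
    sum_const, card_univ]

/-- The residual second-moment matrix about the offset `c` of Gaussian data with means `x i` and
covariances `Q i`, which may be arbitrary square matrices. In the observation model
`x = y - C̃ μ̂` and `Q = C̃ Σ̂ C̃ᵀ`. -/
def scatter (Q : ι → Matrix n n ℝ) (x : ι → n → ℝ) (c : n → ℝ) : Matrix n n ℝ :=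
  ∑ i, (Q i + vecMulVec (x i - c) (x i - c))

lemma scatter_eq_scatter_expect_add (Q : ι → Matrix n n ℝ) (x : ι → n → ℝ) (c : n → ℝ) :
    scatter Q x c =
      scatter Q x (𝔼 i, x i) + card ι • vecMulVec ((𝔼 i, x i) - c) ((𝔼 i, x i) - c) := by
  have hshift := sum_vecMulVec_add_self_of_sum_eq_zero (sum_balance x) ((𝔼 i, x i) - c)
  simp only [balance_apply, sub_add_sub_cancel] at hshift
  simp only [scatter, sum_add_distrib, hshift, add_assoc]

lemma posSemidef_scatter_sub_scatter_expect [Finite n] (Q : ι → Matrix n n ℝ)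
    (x : ι → n → ℝ) (c : n → ℝ) : (scatter Q x c - scatter Q x (𝔼 i, x i)).PosSemidef := by
  rw [scatter_eq_scatter_expect_add Q x c, add_sub_cancel_left, ← Nat.cast_smul_eq_nsmul ℝ]
  exact (posSemidef_vecMulVec_self_star _).smul (Nat.cast_nonneg _)

end Scatter

theorem mstep_observation_map_optimum_general {ι n : Type*} [Fintype ι] [Nonempty ι]
    [Fintype n] [DecidableEq n] (Q : ι → Matrix n n ℝ) (x : ι → n → ℝ)
    (hpd : ((card ι : ℝ)⁻¹ • scatter Q x (𝔼 i, x i)).PosDef)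
    (c : n → ℝ) {S : Matrix n n ℝ} (hS : S.PosDef) :
    gaussianLoss (card ι) (scatter Q x (𝔼 i, x i)) ((card ι : ℝ)⁻¹ • scatter Q x (𝔼 i, x i)) ≤
      gaussianLoss (card ι) (scatter Q x c) S := by
  set A := (card ι : ℝ)⁻¹ • scatter Q x (𝔼 i, x i)
  have hscatter : scatter Q x (𝔼 i, x i) = (card ι : ℝ) • A :=
    (smul_inv_smul₀ (Nat.cast_ne_zero.mpr card_ne_zero) _).symm
  calc gaussianLoss (card ι) (scatter Q x (𝔼 i, x i)) A
      ≤ gaussianLoss (card ι) (scatter Q x (𝔼 i, x i)) S := by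
        rw [hscatter]
        exact gaussianLoss_smul_self_le (Nat.cast_nonneg _) hpd hS
    _ ≤ gaussianLoss (card ι) (scatter Q x c) S :=
        gaussianLoss_le_of_posSemidef_sub hS (posSemidef_scatter_sub_scatter_expect Q x c)

/-- Theorem 3.1, observation-map part: with the output matrix `C̃` fixed, the loss
`L₂(c₀, Σᵥ)` attains its global minimum at the stated `c₀*` and `Σᵥ*`. -/
theorem mstep_observation_map_optimum (p N M L : ℕ) (hp : 1 ≤ p) (hN : 1 ≤ N) (hM : 1 ≤ M)
    (y : Fin M → Fin (L + 1) → Fin p → ℝ)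
    (μhat : Fin M → Fin (L + 1) → Fin N → ℝ)
    (Shat : Fin M → Fin (L + 1) → Matrix (Fin N) (Fin N) ℝ)
    (hShat : ∀ m l, (Shat m l).PosSemidef)
    (Ct : Matrix (Fin p) (Fin N) ℝ)
    (c0star : Fin p → ℝ)
    (hc0star : c0star =
      ((M : ℝ) * (L + 1))⁻¹ • ∑ m, ∑ l, (y m l - Ct.mulVec (μhat m l)))
    (Svstar : Matrix (Fin p) (Fin p) ℝ)
    (hSvstar : Svstar =
      ((M : ℝ) * (L + 1))⁻¹ •
        ∑ m, ∑ l,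
          (Ct * Shat m l * Ctᵀ +
            Matrix.vecMulVec (y m l - c0star - Ct.mulVec (μhat m l))
              (y m l - c0star - Ct.mulVec (μhat m l))))
    (hpd : Svstar.PosDef) :
    ∀ (c0 : Fin p → ℝ) (Sv : Matrix (Fin p) (Fin p) ℝ), Sv.PosDef →
      (M : ℝ) * (L + 1) * Real.log (((2 * Real.pi) • Svstar).det) +
          (Svstar⁻¹ *
            ∑ m, ∑ l,
              (Ct * Shat m l * Ctᵀ +
                Matrix.vecMulVec (y m l - c0star - Ct.mulVec (μhat m l))
                  (y m l - c0star - Ct.mulVec (μhat m l)))).trace ≤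
        (M : ℝ) * (L + 1) * Real.log (((2 * Real.pi) • Sv).det) +
          (Sv⁻¹ *
            ∑ m, ∑ l,
              (Ct * Shat m l * Ctᵀ +
                Matrix.vecMulVec (y m l - c0 - Ct.mulVec (μhat m l))
                  (y m l - c0 - Ct.mulVec (μhat m l)))).trace := by
  intro c0 Sv hSv
  have : NeZero M := ⟨by lia⟩
  simpa only [expect_prod_eq_inv_smul_sum_sum, scatter, gaussianLoss, sum_prod_type, card_prod,
    Fintype.card_fin, Nat.cast_mul, Nat.cast_add_one, ← hc0star, sub_right_comm _ (Ct.mulVec _),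
    ← hSvstar, hpd, true_imp_iff] using mstep_observation_map_optimum_general
      (fun i : Fin M × Fin (L + 1) => Ct * Shat i.1 i.2 * Ctᵀ)
      (fun i => y i.1 i.2 - Ct.mulVec (μhat i.1 i.2)) (c := c0) (hS := hSv)
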